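/- Suppose F satisfies (G1) and the Perron–Frobenius operator P_σ of the base shift has spectral gap on d_θ-Lipschitz functions with constants D > 0, r ∈ (0,1). Then, with β₁ = max{√α, √r} and D₂ = (1 + D/(1−α))/β₁, for every signed measure μ ∈ V = {μ ∈ S^∞ : ∫ φ₁ dm = 0} and every n ≥ 1, ‖F^{*n}μ‖_∞ ≤ D₂ β₁^n ‖μ‖_{S^∞} (exponential convergence to equilibrium). -/

import Mathlib

open MeasureTheory ENNReal Set

namespace RDS

/-- The one-sided subshift of finite type `Σ_A^+` determined by the 0-1 matrix `A`. -/
abbrev SigmaA (N : ℕ) (A : Fin N → Fin N → Bool) :=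
  {x : ℕ → Fin N // ∀ i, A (x i) (x (i + 1)) = true}

variable {N : ℕ} {A : Fin N → Fin N → Bool}

/-- The shift map `σ` on `Σ_A^+`. -/
def shift (x : SigmaA N A) : SigmaA N A :=
  ⟨fun i => x.val (i + 1), fun i => x.prop (i + 1)⟩

/-- Aperiodicity of a 0-1 matrix: some power has all entries positive. -/
def Aperiodic (A : Fin N → Fin N → Bool) : Prop :=
  ∃ k : ℕ, 0 < k ∧ ∀ i j,
    0 < ((Matrix.of fun a b => if A a b then (1 : ℕ) else 0) ^ k) i j

/-- The metric `d_θ(x,y) = Σ_i θ^i (1 - δ(x_i, y_i))` on `Σ_A^+`. -/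
noncomputable def dTheta (θ : ℝ) (x y : SigmaA N A) : ℝ :=
  ∑' i : ℕ, θ ^ i * (if x.val i = y.val i then (0 : ℝ) else 1)

/-- Cylinder sets of `Σ_A^+`. -/
def cylinder (n : ℕ) (w : Fin (n + 1) → Fin N) : Set (SigmaA N A) :=
  {x | ∀ i : Fin (n + 1), x.val i = w i}

/-- `m` is a Markov measure on `Σ_A^+` compatible with `A`: it is given on
cylinders by a stochastic matrix `P` (vanishing where `A` vanishes) and a
stationary probability vector `p`. -/
def IsMarkov (m : Measure (SigmaA N A)) : Prop :=
  ∃ (p : Fin N → ℝ≥0∞) (P : Fin N → Fin N → ℝ≥0∞),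
    (∑ i, p i = 1) ∧ (∀ i, ∑ j, P i j = 1) ∧ (∀ j, ∑ i, p i * P i j = p j) ∧
    (∀ i j, A i j = false → P i j = 0) ∧
    ∀ (n : ℕ) (w : Fin (n + 1) → Fin N),
      m (cylinder n w) = p (w 0) * ∏ i : Fin n, P (w i.castSucc) (w i.succ)

/-- `σ_i⁻¹(γ)`: the sequence `γ` with the symbol `i` prepended
(defined when `A i γ₀ = 1`), i.e. the inverse branch of the restriction `σ_i`
of `σ` to the cylinder `[i]`. -/
def prepend (i : Fin N) (x : SigmaA N A) (h : A i (x.val 0) = true) : SigmaA N A :=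
  ⟨fun n => match n with
    | 0 => i
    | Nat.succ k => x.val k,
   fun j => match j with
    | 0 => h
    | Nat.succ k => x.prop k⟩

/-- `f` is `L`-Lipschitz with respect to the distance function `d`. -/
def LipWithD {X : Type*} (d : X → X → ℝ) (L : ℝ) (f : X → ℝ) : Prop :=
  ∀ x y, |f x - f y| ≤ L * d x y

/-- `f` is Lipschitz with respect to the distance function `d`. -/
def LipD {X : Type*} (d : X → X → ℝ) (f : X → ℝ) : Prop :=
  ∃ L : ℝ, LipWithD d L f

/-- The best Lipschitz constant of `f` with respect to `d` (valued in `ℝ≥0∞`). -/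
noncomputable def lipConst {X : Type*} (d : X → X → ℝ) (f : X → ℝ) : ℝ≥0∞ :=
  ⨆ (x : X) (y : X), ENNReal.ofReal (|f x - f y| / d x y)

/-- The sup norm of `f` (valued in `ℝ≥0∞`). -/
noncomputable def supNormE {X : Type*} (f : X → ℝ) : ℝ≥0∞ :=
  ⨆ x : X, ENNReal.ofReal |f x|

/-- The norm `‖f‖_θ = ‖f‖_∞ + Lip_d(f)`. -/
noncomputable def thetaNorm {X : Type*} (d : X → X → ℝ) (f : X → ℝ) : ℝ≥0∞ :=
  supNormE f + lipConst d f

/-- The Perron-Frobenius operator duality characterizing `P_σ`: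
`∫ P_σ(φ) · ψ dm = ∫ φ · (ψ ∘ σ) dm` for integrable `φ` and bounded measurable `ψ`. -/
def IsPerronFrobenius (m : Measure (SigmaA N A))
    (Pσ : (SigmaA N A → ℝ) → SigmaA N A → ℝ) : Prop :=
  ∀ φ ψ : SigmaA N A → ℝ, Integrable φ m → Measurable ψ → (∃ C, ∀ x, |ψ x| ≤ C) →
    ∫ x, Pσ φ x * ψ x ∂m = ∫ x, φ x * ψ (shift x) ∂m

/-- Spectral gap for `P_σ` on `d_θ`-Lipschitz functions with constants `D`, `r`:
`‖P_σ^n φ‖_θ ≤ D r^n ‖φ‖_θ` for all `n` and all `d_θ`-Lipschitz `φ` with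
`∫ φ dm = 0`. -/
def HasGap (m : Measure (SigmaA N A)) (θ : ℝ)
    (Pσ : (SigmaA N A → ℝ) → SigmaA N A → ℝ) (D r : ℝ) : Prop :=
  ∀ φ : SigmaA N A → ℝ, LipD (dTheta θ) φ → (∫ x, φ x ∂m) = 0 →
    ∀ n : ℕ, thetaNorm (dTheta θ) (Pσ^[n] φ) ≤
      ENNReal.ofReal (D * r ^ n) * thetaNorm (dTheta θ) φ

/-- `Jm i` is the Jacobian `J_{m,σ_i}` of `m` with respect to the branch `σ_i`
(the restriction of `σ` to the cylinder `[i]`): `m (σ_i(E)) = ∫_E J_{m,σ_i} dm`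
for every measurable `E` (intersected with `[i]`). -/
def IsJacobian (m : Measure (SigmaA N A)) (Jm : Fin N → SigmaA N A → ℝ) : Prop :=
  ∀ (i : Fin N) (E : Set (SigmaA N A)), MeasurableSet E →
    m {γ : SigmaA N A | ∃ h : A i (γ.val 0) = true, prepend i γ h ∈ E} =
      ∫⁻ x in E ∩ {x : SigmaA N A | x.val 0 = i}, ENNReal.ofReal (Jm i x) ∂m

variable {K : Type*} [MetricSpace K] [MeasurableSpace K]

/-- The Wasserstein-Kantorovich like distance `W(ν₁,ν₂)`: the supremum of
`|∫ g dν₁ - ∫ g dν₂|` over `g : K → ℝ` with `Lip(g) ≤ 1` and `‖g‖_∞ ≤ 1`.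
Applied with `ν₂ = 0` it gives the norm `‖ν₁‖_W`; applied to the two parts of a
decomposition of a signed measure it gives its `‖·‖_W` norm. -/
noncomputable def wDist (ν₁ ν₂ : Measure K) : ℝ≥0∞ :=
  ⨆ g : {g : K → ℝ // LipschitzWith 1 g ∧ ∀ z, |g z| ≤ 1},
    ENNReal.ofReal |∫ z, g.val z ∂ν₁ - ∫ z, g.val z ∂ν₂|

/-- The skew product `F(x,z) = (σ(x), G(x,z))`. -/
def skew (G : SigmaA N A × K → K) (p : SigmaA N A × K) : SigmaA N A × K :=
  (shift p.1, G p)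

/-- The transfer operator `F^* μ (E) = μ (F⁻¹ E)` acting on signed measures. -/
noncomputable def transfer (G : SigmaA N A × K → K)
    (μ : SignedMeasure (SigmaA N A × K)) : SignedMeasure (SigmaA N A × K) :=
  μ.map (skew G)

/-- Condition (G1): uniform contraction of the vertical fibers with rate `α`. -/
def CondG1 (G : SigmaA N A × K → K) (α : ℝ) : Prop :=
  ∀ (x : SigmaA N A) (z₁ z₂ : K), dist (G (x, z₁)) (G (x, z₂)) ≤ α * dist z₁ z₂

/-- Condition (G2): `x ↦ G(x,z)` is `d_θ`-Lipschitz with constant `H`,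
uniformly in `z`. -/
def CondG2 (θ : ℝ) (G : SigmaA N A × K → K) (H : ℝ) : Prop :=
  ∀ (z : K) (x y : SigmaA N A), dist (G (x, z)) (G (y, z)) ≤ H * dTheta θ x y

/-- `T` is (the path `γ ↦ μ|_γ` of) a disintegration of `μ` along the vertical
fibers, over the reference measure `m`: `μ(E) = ∫ (μ|_γ)(E ∩ γ) dm(γ)`. -/
def IsDisint (m : Measure (SigmaA N A)) (μ : Measure (SigmaA N A × K))
    (T : SigmaA N A → Measure K) : Prop :=
  (∀ E : Set (SigmaA N A × K), MeasurableSet E →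
      μ E = ∫⁻ γ, T γ {z | (γ, z) ∈ E} ∂m) ∧
  ∀ E : Set K, MeasurableSet E → Measurable fun γ => T γ E

/-- The (essential) `‖·‖_W`-Lipschitz constant of a path of measures,
`|Γ|_θ^ω = ess sup_{γ₁ ≠ γ₂} ‖Γ(γ₁) - Γ(γ₂)‖_W / d_θ(γ₁,γ₂)`. -/
noncomputable def pathLip (m : Measure (SigmaA N A)) (θ : ℝ)
    (T : SigmaA N A → Measure K) : ℝ≥0∞ :=
  essSup (fun p : SigmaA N A × SigmaA N A =>
    wDist (T p.1) (T p.2) / ENNReal.ofReal (dTheta θ p.1 p.2)) (m.prod m)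

/-- The Lipschitz constant `|μ|_θ` of a positive measure: the infimum over
disintegrations `ω` of `μ` of `|μ|_θ^ω`. -/
noncomputable def lipDisint (m : Measure (SigmaA N A)) (θ : ℝ)
    (μ : Measure (SigmaA N A × K)) : ℝ≥0∞ :=
  ⨅ T : {T : SigmaA N A → Measure K // IsDisint m μ T}, pathLip m θ T.val

/-- The fiberwise transfer formula: the path representing `F^*μ` induced by the
path `T` representing `μ`, i.e.
`γ ↦ Σ_i 1_{σ([i])}(γ) (F_{iγ})_*(T(iγ)) / J_{m,σ_i}(iγ)`. -/
noncomputable def transferPath (G : SigmaA N A × K → K) (Jm : Fin N → SigmaA N A → ℝ)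
    (T : SigmaA N A → Measure K) : SigmaA N A → Measure K :=
  fun γ => ∑ i : Fin N, if h : A i (γ.val 0) = true then
      ENNReal.ofReal ((Jm i (prepend i γ h))⁻¹) •
        ((T (prepend i γ h)).map fun z => G (prepend i γ h, z))
    else 0

variable [BorelSpace K] [CompactSpace K] [Nonempty K]

/-- The fiberwise restriction `μ|_γ = π₂_* (φ₁(γ) μ_γ)` of a finite positive
measure `μ` on `Σ_A^+ × K`, where `({μ_γ}_γ, φ₁ m)` is the Rokhlin
disintegration of `μ` along the vertical fibers and `φ₁ = d(π₁_*μ)/dm`. -/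
noncomputable def fiberR (m : Measure (SigmaA N A))
    (μ : Measure (SigmaA N A × K)) (γ : SigmaA N A) : Measure K := by
  by_cases h : IsFiniteMeasure μ
  · haveI := h
    exact (μ.fst.rnDeriv m γ) • μ.condKernel γ
  · exact 0

/-- The norm `‖μ‖_∞ = ess sup_γ ‖μ|_γ‖_W` of a signed measure written as a
difference `μ = μ₁ - μ₂` of positive measures. -/
noncomputable def infNormPair (m : Measure (SigmaA N A))
    (μ₁ μ₂ : Measure (SigmaA N A × K)) : ℝ≥0∞ :=
  essSup (fun γ => wDist (fiberR m μ₁ γ) (fiberR m μ₂ γ)) m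

/-- The marginal density `φ₁ = d(π₁_*μ)/dm` of the signed measure `μ = μ₁ - μ₂`. -/
noncomputable def phiPair (m : Measure (SigmaA N A))
    (μ₁ μ₂ : Measure (SigmaA N A × K)) (γ : SigmaA N A) : ℝ :=
  (μ₁.fst.rnDeriv m γ).toReal - (μ₂.fst.rnDeriv m γ).toReal

/-- Membership in `AB`: both parts are finite with first marginal absolutely
continuous with respect to `m`. -/
def MemABPair (m : Measure (SigmaA N A)) (μ₁ μ₂ : Measure (SigmaA N A × K)) : Prop :=
  μ₁.fst ≪ m ∧ μ₂.fst ≪ m ∧ IsFiniteMeasure μ₁ ∧ IsFiniteMeasure μ₂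

/-- Membership in `S^∞`: `μ ∈ AB`, `‖μ‖_∞ < ∞` and the marginal density `φ₁`
has a `d_θ`-Lipschitz version. -/
def MemSPair (m : Measure (SigmaA N A)) (θ : ℝ)
    (μ₁ μ₂ : Measure (SigmaA N A × K)) : Prop :=
  MemABPair m μ₁ μ₂ ∧ infNormPair m μ₁ μ₂ < ⊤ ∧
    ∃ ψ : SigmaA N A → ℝ, ψ =ᵐ[m] phiPair m μ₁ μ₂ ∧ LipD (dTheta θ) ψ

/-- `‖φ₁‖_θ`, computed on the best version of the marginal density. -/
noncomputable def thetaNormMu (m : Measure (SigmaA N A)) (θ : ℝ)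
    (μ₁ μ₂ : Measure (SigmaA N A × K)) : ℝ≥0∞ :=
  ⨅ ψ : {ψ : SigmaA N A → ℝ // ψ =ᵐ[m] phiPair m μ₁ μ₂}, thetaNorm (dTheta θ) ψ.val

/-- The norm `‖μ‖_{S^∞} = ‖φ₁‖_θ + ‖μ‖_∞`. -/
noncomputable def sNormPair (m : Measure (SigmaA N A)) (θ : ℝ)
    (μ₁ μ₂ : Measure (SigmaA N A × K)) : ℝ≥0∞ :=
  thetaNormMu m θ μ₁ μ₂ + infNormPair m μ₁ μ₂

/-- Positive part of a signed measure. -/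
noncomputable def jPos {X : Type*} [MeasurableSpace X] (μ : SignedMeasure X) : Measure X :=
  μ.toJordanDecomposition.posPart

/-- Negative part of a signed measure. -/
noncomputable def jNeg {X : Type*} [MeasurableSpace X] (μ : SignedMeasure X) : Measure X :=
  μ.toJordanDecomposition.negPart

/-- Membership in `AB` for signed measures. -/
def MemAB (m : Measure (SigmaA N A)) (μ : SignedMeasure (SigmaA N A × K)) : Prop :=
  MemABPair m (jPos μ) (jNeg μ)

/-- Membership in `S^∞` for signed measures. -/
def MemS (m : Measure (SigmaA N A)) (θ : ℝ) (μ : SignedMeasure (SigmaA N A × K)) : Prop :=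
  MemSPair m θ (jPos μ) (jNeg μ)

/-- `‖μ‖_∞` for signed measures. -/
noncomputable def infNorm (m : Measure (SigmaA N A))
    (μ : SignedMeasure (SigmaA N A × K)) : ℝ≥0∞ :=
  infNormPair m (jPos μ) (jNeg μ)

/-- `‖μ‖_{S^∞}` for signed measures. -/
noncomputable def sNorm (m : Measure (SigmaA N A)) (θ : ℝ)
    (μ : SignedMeasure (SigmaA N A × K)) : ℝ≥0∞ :=
  sNormPair m θ (jPos μ) (jNeg μ)

/-- `‖φ₁‖_∞` of the marginal density of a signed measure. -/
noncomputable def phiSup (m : Measure (SigmaA N A))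
    (μ : SignedMeasure (SigmaA N A × K)) : ℝ≥0∞ :=
  essSup (fun γ => ENNReal.ofReal |phiPair m (jPos μ) (jNeg μ) γ|) m

/-!
Tested against `1_E ⊗ g` with `g` 1-Lipschitz and `|g| ≤ 1`, the norm `‖μ‖_∞` depends on a pair
of positive measures only through their difference, so `F^{*n}μ` may be represented by the
pushforwards of `μ⁺` and `μ⁻` under `F^n`, which need not be mutually singular. For `g` as above,
`g ∘ G(γ, ·)` is `α` times such a function plus a constant, and the constant only sees the mass
`φ₁(γ)` of the fiber; hence `‖F^*μ‖_∞ ≤ α ‖μ‖_∞ + ‖φ₁‖_∞`. The density `φ₁` evolves under `P_σ`,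
so along the iterates it is bounded by `D r^k ‖φ₁‖_θ`. Unrolling the recursion leaves
`∑_{i<n} r^i α^(n-1-i)`, which the square roots in `β₁` turn into at most `β₁^(n-1) / (1-α)`,
free of the factor `n` that appears when `r = α`.
-/

open scoped NNReal

theorem ae_enorm_le_iff_enorm_setIntegral_le {X : Type*} [MeasurableSpace X] {m : Measure X}
    [IsFiniteMeasure m] {u : X → ℝ} (hu : Integrable u m) {C : ℝ≥0∞} :
    (∀ᵐ x ∂m, ‖u x‖ₑ ≤ C) ↔
      ∀ E, MeasurableSet E → ‖∫ x in E, u x ∂m‖ₑ ≤ C * m E := by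
  refine ⟨fun h E _ => ?_, fun h => ?_⟩
  · calc ‖∫ x in E, u x ∂m‖ₑ
        ≤ ∫⁻ x in E, ‖u x‖ₑ ∂m := enorm_integral_le_lintegral_enorm _
      _ ≤ ∫⁻ _ in E, C ∂m := lintegral_mono_ae (ae_restrict_of_ae h)
      _ = C * m E := setLIntegral_const E C
  induction C with
  | top => simp
  | coe c =>
    have hreal : ∀ E, MeasurableSet E → |∫ x in E, u x ∂m| ≤ ∫ _ in E, (c : ℝ) ∂m := by
      intro E hE
      have := ENNReal.toReal_mono (by finiteness) (h E hE)
      rwa [toReal_enorm, ENNReal.toReal_mul, Real.norm_eq_abs, ENNReal.coe_toReal, mul_comm,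
        ← smul_eq_mul, ← Measure.real, ← setIntegral_const] at this
    have hle : u ≤ᵐ[m] fun _ => (c : ℝ) :=
      ae_le_of_forall_setIntegral_le hu (integrable_const _)
        fun E hE _ => (le_abs_self _).trans (hreal E hE)
    have hge : -u ≤ᵐ[m] fun _ => (c : ℝ) :=
      ae_le_of_forall_setIntegral_le hu.neg (integrable_const _) fun E hE _ => by
        simpa only [Pi.neg_apply, integral_neg] using (neg_le_abs _).trans (hreal E hE)
    filter_upwards [hle, hge] with x hx hx'
    rw [enorm_le_coe, ← NNReal.coe_le_coe, coe_nnnorm, Real.norm_eq_abs]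
    exact abs_le'.2 ⟨hx, hx'⟩

section TestFunctions

variable {Y : Type*} [MetricSpace Y]

/-- The test functions dual to `wDist`: the 1-Lipschitz functions with values in `[-1, 1]`. -/
def lipUnitBall (Y : Type*) [MetricSpace Y] : Set (Y → ℝ) :=
  {g | LipschitzWith 1 g ∧ ∀ y, |g y| ≤ 1}

theorem exists_mem_lipUnitBall_eq_mul_add (hY : ∀ y z : Y, dist y z ≤ 1) {L : ℝ≥0} {h : Y → ℝ}
    (hL : LipschitzWith L h) (y₀ : Y) :
    ∃ k ∈ lipUnitBall Y, ∀ y, h y = L * k y + h y₀ := by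
  have hsub : ∀ y z, |h y - h z| ≤ L * dist y z := fun y z => by
    simpa only [Real.dist_eq] using hL.dist_le_mul y z
  have hquot : ∀ y z, |(L : ℝ)⁻¹ * (h y - h z)| ≤ dist y z := fun y z => by
    rw [abs_mul, abs_of_nonneg (by positivity : (0 : ℝ) ≤ (L : ℝ)⁻¹)]
    exact inv_mul_le_of_le_mul₀ L.coe_nonneg dist_nonneg (hsub y z)
  refine ⟨fun y => (L : ℝ)⁻¹ * (h y - h y₀), ⟨?_, fun y => (hquot y y₀).trans (hY y y₀)⟩,
    fun y => ?_⟩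
  · refine LipschitzWith.of_dist_le_mul fun y z => ?_
    simpa only [Real.dist_eq, ← mul_sub, sub_sub_sub_cancel_right, NNReal.coe_one, one_mul]
      using hquot y z
  · rcases eq_or_ne (L : ℝ) 0 with h0 | h0
    · have := hsub y y₀
      rw [h0, zero_mul, abs_nonpos_iff, sub_eq_zero] at this
      simp [h0, this]
    · rw [mul_inv_cancel_left₀ h0, sub_add_cancel]

variable [MeasurableSpace Y]

theorem enorm_integral_sub_le_wDist (ν₁ ν₂ : Measure Y) {g : Y → ℝ} (hg : g ∈ lipUnitBall Y) :
    ‖∫ y, g y ∂ν₁ - ∫ y, g y ∂ν₂‖ₑ ≤ wDist ν₁ ν₂ := by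
  rw [Real.enorm_eq_ofReal_abs]
  exact le_iSup (fun g : lipUnitBall Y => ENNReal.ofReal |∫ y, g.1 y ∂ν₁ - ∫ y, g.1 y ∂ν₂|)
    ⟨g, hg⟩

variable [OpensMeasurableSpace Y]

theorem integrable_comp_of_mem_lipUnitBall {Z : Type*} [MeasurableSpace Z] (ν : Measure Z)
    [IsFiniteMeasure ν] {g : Y → ℝ} (hg : g ∈ lipUnitBall Y) {T : Z → Y} (hT : Measurable T) :
    Integrable (fun z => g (T z)) ν :=
  Integrable.of_bound (hg.1.continuous.measurable.comp hT).aestronglyMeasurable 1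
    (ae_of_all _ fun z => hg.2 (T z))

theorem enorm_integral_sub_le_mul_wDist_add [Nonempty Y] (hY : ∀ y z : Y, dist y z ≤ 1)
    (ν₁ ν₂ : Measure Y) [IsFiniteMeasure ν₁] [IsFiniteMeasure ν₂] {L : ℝ≥0} {h : Y → ℝ}
    (hL : LipschitzWith L h) (hh : ∀ y, |h y| ≤ 1) :
    ‖∫ y, h y ∂ν₁ - ∫ y, h y ∂ν₂‖ₑ ≤
      L * wDist ν₁ ν₂ + ‖ν₁.real univ - ν₂.real univ‖ₑ := by
  obtain ⟨y₀⟩ := ‹Nonempty Y›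
  obtain ⟨k, hk, hkh⟩ := exists_mem_lipUnitBall_eq_mul_add hY hL y₀
  have hint (ν : Measure Y) [IsFiniteMeasure ν] :
      ∫ y, h y ∂ν = L * ∫ y, k y ∂ν + ν.real univ * h y₀ := by
    have hk_int : Integrable k ν := integrable_comp_of_mem_lipUnitBall ν hk measurable_id
    rw [integral_congr_ae (ae_of_all ν hkh), integral_add (hk_int.const_mul _)
      (integrable_const _), integral_const_mul, integral_const, smul_eq_mul]
  calc ‖∫ y, h y ∂ν₁ - ∫ y, h y ∂ν₂‖ₑ
      = ‖L * (∫ y, k y ∂ν₁ - ∫ y, k y ∂ν₂) + (ν₁.real univ - ν₂.real univ) * h y₀‖ₑ := by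
        rw [hint ν₁, hint ν₂]
        congr 1
        ring
    _ ≤ ‖(L : ℝ)‖ₑ * ‖∫ y, k y ∂ν₁ - ∫ y, k y ∂ν₂‖ₑ +
          ‖ν₁.real univ - ν₂.real univ‖ₑ * ‖h y₀‖ₑ := by
        rw [← enorm_mul, ← enorm_mul]
        exact enorm_add_le _ _
    _ ≤ L * wDist ν₁ ν₂ + ‖ν₁.real univ - ν₂.real univ‖ₑ * 1 := by
        gcongr
        · simp
        · exact enorm_integral_sub_le_wDist ν₁ ν₂ hk
        · simpa [Real.enorm_eq_ofReal_abs] using hh y₀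
    _ = L * wDist ν₁ ν₂ + ‖ν₁.real univ - ν₂.real univ‖ₑ := by rw [mul_one]

variable [CompactSpace Y]

theorem continuous_integral_continuousMap (ν : Measure Y) [IsFiniteMeasure ν] :
    Continuous fun g : C(Y, ℝ) => ∫ y, g y ∂ν := by
  have hint (g : C(Y, ℝ)) : Integrable g ν := g.continuous.integrable_of_hasCompactSupport
    (HasCompactSupport.of_compactSpace g)
  refine (LipschitzWith.of_dist_le_mul (K := (ν univ).toNNReal) fun g g' => ?_).continuous
  rw [dist_eq_norm, ← integral_sub (hint g) (hint g'), dist_eq_norm, mul_comm]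
  exact norm_integral_le_of_norm_le_const (ae_of_all _ fun y => (g - g').norm_coe_le_norm y)

theorem exists_countable_subset_lipUnitBall_wDist_le (Y : Type*) [MetricSpace Y]
    [MeasurableSpace Y] [OpensMeasurableSpace Y] [CompactSpace Y] :
    ∃ s ⊆ lipUnitBall Y, s.Countable ∧
      ∀ (ν₁ ν₂ : Measure Y) [IsFiniteMeasure ν₁] [IsFiniteMeasure ν₂] (C : ℝ≥0∞),
        (∀ g ∈ s, ‖∫ y, g y ∂ν₁ - ∫ y, g y ∂ν₂‖ₑ ≤ C) → wDist ν₁ ν₂ ≤ C := by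
  obtain ⟨s, hs, hdense⟩ :=
    TopologicalSpace.exists_countable_dense {g : C(Y, ℝ) // ⇑g ∈ lipUnitBall Y}
  refine ⟨(fun g : {g : C(Y, ℝ) // ⇑g ∈ lipUnitBall Y} => ⇑g.1) '' s,
    image_subset_iff.2 fun g _ => g.2, hs.image _, fun ν₁ ν₂ _ _ C hC => iSup_le fun g => ?_⟩
  have hclosed : IsClosed {g : {g : C(Y, ℝ) // ⇑g ∈ lipUnitBall Y} |
      ‖∫ y, g.1 y ∂ν₁ - ∫ y, g.1 y ∂ν₂‖ₑ ≤ C} :=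
    isClosed_le (((continuous_integral_continuousMap ν₁).sub
      (continuous_integral_continuousMap ν₂)).comp continuous_subtype_val).enorm continuous_const
  rw [← Real.enorm_eq_ofReal_abs]
  exact hclosed.closure_subset_iff.2 (fun g hg => hC _ (mem_image_of_mem _ hg))
    (hdense ⟨⟨g.1, g.2.1.continuous⟩, g.2⟩)

end TestFunctions

section FiberMeasures

theorem fiberR_eq (m : Measure (SigmaA N A)) (μ : Measure (SigmaA N A × K))
    [h : IsFiniteMeasure μ] (γ : SigmaA N A) :
    fiberR m μ γ = μ.fst.rnDeriv m γ • μ.condKernel γ :=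
  dif_pos h

theorem fiberR_real_univ (m : Measure (SigmaA N A)) (μ : Measure (SigmaA N A × K))
    [IsFiniteMeasure μ] (γ : SigmaA N A) :
    (fiberR m μ γ).real univ = (μ.fst.rnDeriv m γ).toReal := by
  simp [fiberR_eq, Measure.real]

theorem integral_fiberR (m : Measure (SigmaA N A)) (μ : Measure (SigmaA N A × K))
    [IsFiniteMeasure μ] (γ : SigmaA N A) (g : K → ℝ) :
    ∫ z, g z ∂(fiberR m μ γ) = (μ.fst.rnDeriv m γ).toReal • ∫ z, g z ∂(μ.condKernel γ) := by
  rw [fiberR_eq, integral_smul_measure]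

theorem ae_isFiniteMeasure_fiberR (m : Measure (SigmaA N A)) (μ : Measure (SigmaA N A × K))
    [IsFiniteMeasure μ] : ∀ᵐ γ ∂m, IsFiniteMeasure (fiberR m μ γ) := by
  filter_upwards [Measure.rnDeriv_lt_top μ.fst m] with γ hγ
  rw [fiberR_eq]
  exact ⟨by simp [hγ]⟩

variable {m : Measure (SigmaA N A)} {μ₁ μ₂ ν₁ ν₂ : Measure (SigmaA N A × K)}

theorem infNormPair_le_iff_ae [IsFiniteMeasure μ₁] [IsFiniteMeasure μ₂] {C : ℝ≥0∞} :
    infNormPair m μ₁ μ₂ ≤ C ↔ ∀ g ∈ lipUnitBall K, ∀ᵐ γ ∂m,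
      ‖∫ z, g z ∂(fiberR m μ₁ γ) - ∫ z, g z ∂(fiberR m μ₂ γ)‖ₑ ≤ C := by
  refine ⟨fun hC g hg => ?_, fun hC => essSup_le_of_ae_le _ ?_⟩
  · filter_upwards [ae_le_essSup fun γ => wDist (fiberR m μ₁ γ) (fiberR m μ₂ γ)] with γ hγ
    exact (enorm_integral_sub_le_wDist _ _ hg).trans (hγ.trans hC)
  obtain ⟨s, hsub, hs, hs_le⟩ := exists_countable_subset_lipUnitBall_wDist_le K
  filter_upwards [(ae_ball_iff hs).2 fun g hg => hC g (hsub hg), ae_isFiniteMeasure_fiberR m μ₁,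
    ae_isFiniteMeasure_fiberR m μ₂] with γ hγ _ _
  exact hs_le _ _ C hγ

variable [IsFiniteMeasure m]

theorem integrable_integral_fiberR {μ : Measure (SigmaA N A × K)} [IsFiniteMeasure μ]
    (hμ : μ.fst ≪ m) {f : SigmaA N A × K → ℝ} (hf : Integrable f μ) :
    Integrable (fun γ => ∫ z, f (γ, z) ∂(fiberR m μ γ)) m := by
  simp_rw [integral_fiberR]
  exact (integrable_rnDeriv_smul_iff hμ).2 hf.integral_condKernel

theorem setIntegral_integral_fiberR {μ : Measure (SigmaA N A × K)} [IsFiniteMeasure μ]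
    (hμ : μ.fst ≪ m) {f : SigmaA N A × K → ℝ} (hf : Integrable f μ) {E : Set (SigmaA N A)}
    (hE : MeasurableSet E) :
    ∫ γ in E, ∫ z, f (γ, z) ∂(fiberR m μ γ) ∂m = ∫ p in E ×ˢ univ, f p ∂μ := by
  simp_rw [integral_fiberR]
  rw [setIntegral_rnDeriv_smul hμ hE,
    Measure.setIntegral_condKernel_univ_right hE hf.integrableOn]

theorem ae_enorm_integral_fiberR_sub_le_iff (h : MemABPair m μ₁ μ₂) {f : SigmaA N A × K → ℝ}
    (hf₁ : Integrable f μ₁) (hf₂ : Integrable f μ₂) {C : ℝ≥0∞} :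
    (∀ᵐ γ ∂m, ‖∫ z, f (γ, z) ∂(fiberR m μ₁ γ) - ∫ z, f (γ, z) ∂(fiberR m μ₂ γ)‖ₑ ≤ C) ↔
      ∀ E, MeasurableSet E →
        ‖∫ p in E ×ˢ univ, f p ∂μ₁ - ∫ p in E ×ˢ univ, f p ∂μ₂‖ₑ ≤ C * m E := by
  obtain ⟨hμ₁, hμ₂, _, _⟩ := h
  have h₁ := integrable_integral_fiberR hμ₁ hf₁
  have h₂ := integrable_integral_fiberR hμ₂ hf₂
  refine (ae_enorm_le_iff_enorm_setIntegral_le (h₁.sub h₂)).trans (forall₂_congr fun E hE => ?_)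
  rw [← setIntegral_integral_fiberR hμ₁ hf₁ hE, ← setIntegral_integral_fiberR hμ₂ hf₂ hE,
    ← integral_sub h₁.integrableOn h₂.integrableOn]
  rfl

/-- The right-hand side depends on `μ₁` and `μ₂` only through the signed measure `μ₁ - μ₂`. -/
theorem infNormPair_le_iff (h : MemABPair m μ₁ μ₂) {C : ℝ≥0∞} :
    infNormPair m μ₁ μ₂ ≤ C ↔ ∀ g ∈ lipUnitBall K, ∀ E, MeasurableSet E →
      ‖∫ p in E ×ˢ univ, g p.2 ∂μ₁ - ∫ p in E ×ˢ univ, g p.2 ∂μ₂‖ₑ ≤ C * m E := by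
  have ⟨_, _, _, _⟩ := h
  rw [infNormPair_le_iff_ae]
  exact forall₂_congr fun g hg => ae_enorm_integral_fiberR_sub_le_iff h
    (integrable_comp_of_mem_lipUnitBall μ₁ hg measurable_snd)
    (integrable_comp_of_mem_lipUnitBall μ₂ hg measurable_snd)

theorem infNormPair_eq_of_add_eq_add (hν : MemABPair m ν₁ ν₂) (hμ : MemABPair m μ₁ μ₂)
    (h : ν₁ + μ₂ = μ₁ + ν₂) : infNormPair m ν₁ ν₂ = infNormPair m μ₁ μ₂ := by
  have ⟨_, _, _, _⟩ := hν
  have ⟨_, _, _, _⟩ := hμ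
  refine eq_of_forall_ge_iff fun C => ?_
  rw [infNormPair_le_iff hν, infNormPair_le_iff hμ]
  refine forall₄_congr fun g hg E _ => ?_
  have hint (ρ : Measure (SigmaA N A × K)) [IsFiniteMeasure ρ] :
      IntegrableOn (fun p => g p.2) (E ×ˢ univ) ρ :=
    (integrable_comp_of_mem_lipUnitBall ρ hg measurable_snd).integrableOn
  have hadd : ∫ p in E ×ˢ univ, g p.2 ∂ν₁ + ∫ p in E ×ˢ univ, g p.2 ∂μ₂ =
      ∫ p in E ×ˢ univ, g p.2 ∂μ₁ + ∫ p in E ×ˢ univ, g p.2 ∂ν₂ := by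
    rw [← integral_add_measure (hint ν₁) (hint μ₂), ← integral_add_measure (hint μ₁) (hint ν₂),
      ← Measure.restrict_add, ← Measure.restrict_add, h]
  rw [sub_eq_sub_iff_add_eq_add.2 hadd]

end FiberMeasures

section SkewProduct

variable {Y : Type*} {m : Measure (SigmaA N A)} {G : SigmaA N A × Y → Y}

theorem CondG1.lipschitzWith [MetricSpace Y] {α : ℝ} (h : CondG1 G α) (x : SigmaA N A) :
    LipschitzWith α.toNNReal fun y => G (x, y) :=
  LipschitzWith.of_dist_le' (h x)

theorem measurable_shift : Measurable (shift : SigmaA N A → SigmaA N A) := by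
  refine Measurable.subtype_mk (measurable_pi_lambda _ fun i => ?_)
  exact (measurable_pi_apply (i + 1)).comp measurable_subtype_coe

variable [MeasurableSpace Y] {μ μ₁ μ₂ : Measure (SigmaA N A × Y)}

theorem fst_map_skew (hG : Measurable (skew G)) (μ : Measure (SigmaA N A × Y)) :
    (μ.map (skew G)).fst = μ.fst.map shift := by
  rw [Measure.fst, Measure.fst, Measure.map_map measurable_fst hG,
    Measure.map_map measurable_shift measurable_fst]
  rfl

theorem setIntegral_map_skew (hG : Measurable (skew G)) {f : SigmaA N A × Y → ℝ}
    (hf : Measurable f) {E : Set (SigmaA N A)} (hE : MeasurableSet E) :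
    ∫ p in E ×ˢ univ, f p ∂(μ.map (skew G)) =
      ∫ p in (shift ⁻¹' E) ×ˢ univ, f (skew G p) ∂μ :=
  setIntegral_map (hE.prod MeasurableSet.univ) hf.aestronglyMeasurable hG.aemeasurable

theorem MemABPair.map (h : MemABPair m μ₁ μ₂) (hσ : MeasurePreserving shift m m)
    (hG : Measurable (skew G)) : MemABPair m (μ₁.map (skew G)) (μ₂.map (skew G)) := by
  obtain ⟨hμ₁, hμ₂, _, _⟩ := h
  have hfst {μ : Measure (SigmaA N A × Y)} (hμ : μ.fst ≪ m) : (μ.map (skew G)).fst ≪ m := by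
    rw [fst_map_skew hG, ← hσ.map_eq]
    exact hμ.map measurable_shift
  exact ⟨hfst hμ₁, hfst hμ₂, inferInstance, inferInstance⟩

theorem IsPerronFrobenius.setIntegral_eq {Pσ : (SigmaA N A → ℝ) → SigmaA N A → ℝ}
    (hP : IsPerronFrobenius m Pσ) {φ : SigmaA N A → ℝ} (hφ : Integrable φ m)
    {E : Set (SigmaA N A)} (hE : MeasurableSet E) :
    ∫ x in E, Pσ φ x ∂m = ∫ x in shift ⁻¹' E, φ x ∂m := by
  have hdual := hP φ (E.indicator 1) hφ (measurable_one.indicator hE)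
    ⟨1, fun x => by by_cases h : x ∈ E <;> simp [h]⟩
  have hind (f : SigmaA N A → ℝ) (S : Set (SigmaA N A)) (x : SigmaA N A) :
      f x * S.indicator 1 x = S.indicator f x := by
    by_cases h : x ∈ S <;> simp [h]
  have hcomp (x : SigmaA N A) :
      E.indicator (1 : SigmaA N A → ℝ) (shift x) = (shift ⁻¹' E).indicator 1 x := rfl
  simp_rw [hcomp, hind] at hdual
  rwa [integral_indicator hE, integral_indicator (measurable_shift hE)] at hdual

theorem integrable_phiPair [IsFiniteMeasure μ₁] [IsFiniteMeasure μ₂] :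
    Integrable (phiPair m μ₁ μ₂) m :=
  Measure.integrable_toReal_rnDeriv.sub Measure.integrable_toReal_rnDeriv

theorem setIntegral_phiPair [IsFiniteMeasure m] (h : MemABPair m μ₁ μ₂) (E : Set (SigmaA N A)) :
    ∫ γ in E, phiPair m μ₁ μ₂ γ ∂m = μ₁.fst.real E - μ₂.fst.real E := by
  obtain ⟨hμ₁, hμ₂, _, _⟩ := h
  simp only [phiPair]
  rw [integral_sub Measure.integrable_toReal_rnDeriv.integrableOn
    Measure.integrable_toReal_rnDeriv.integrableOn,
    Measure.setIntegral_toReal_rnDeriv hμ₁, Measure.setIntegral_toReal_rnDeriv hμ₂]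

theorem phiPair_map_skew [IsFiniteMeasure m] {Pσ : (SigmaA N A → ℝ) → SigmaA N A → ℝ}
    (hP : IsPerronFrobenius m Pσ) (hσ : MeasurePreserving shift m m)
    (hG : Measurable (skew G)) (h : MemABPair m μ₁ μ₂)
    {χ : SigmaA N A → ℝ} (hχ : χ =ᵐ[m] phiPair m μ₁ μ₂) (hPχ : Integrable (Pσ χ) m) :
    Pσ χ =ᵐ[m] phiPair m (μ₁.map (skew G)) (μ₂.map (skew G)) := by
  have ⟨_, _, _, _⟩ := h
  refine hPχ.ae_eq_of_forall_setIntegral_eq _ _ integrable_phiPair fun E hE _ => ?_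
  rw [hP.setIntegral_eq (integrable_phiPair.congr hχ.symm) hE,
    setIntegral_congr_ae (hσ.measurable hE) (hχ.mono fun x hx _ => hx), setIntegral_phiPair h,
    setIntegral_phiPair (h.map hσ hG), fst_map_skew hG, fst_map_skew hG,
    map_measureReal_apply measurable_shift hE, map_measureReal_apply measurable_shift hE]

end SkewProduct

theorem infNormPair_map_skew_le {m : Measure (SigmaA N A)} [IsFiniteMeasure m]
    {G : SigmaA N A × K → K} {α : ℝ} {μ₁ μ₂ : Measure (SigmaA N A × K)}
    (hσ : MeasurePreserving shift m m) (hK : ∀ z w : K, dist z w ≤ 1)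
    (hG : Measurable (skew G)) (hG1 : CondG1 G α) (h : MemABPair m μ₁ μ₂) :
    infNormPair m (μ₁.map (skew G)) (μ₂.map (skew G)) ≤
      ENNReal.ofReal α * infNormPair m μ₁ μ₂ + eLpNormEssSup (phiPair m μ₁ μ₂) m := by
  have ⟨_, _, _, _⟩ := h
  refine (infNormPair_le_iff (h.map hσ hG)).2 fun g hg E hE => ?_
  have hfiber : ∀ᵐ γ ∂m,
      ‖∫ z, g (G (γ, z)) ∂(fiberR m μ₁ γ) - ∫ z, g (G (γ, z)) ∂(fiberR m μ₂ γ)‖ₑ ≤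
        ENNReal.ofReal α * infNormPair m μ₁ μ₂ + eLpNormEssSup (phiPair m μ₁ μ₂) m := by
    filter_upwards [ae_isFiniteMeasure_fiberR m μ₁, ae_isFiniteMeasure_fiberR m μ₂,
      ae_le_essSup fun γ => wDist (fiberR m μ₁ γ) (fiberR m μ₂ γ),
      ae_le_eLpNormEssSup (f := phiPair m μ₁ μ₂)] with γ _ _ hw hφ
    have hL : LipschitzWith α.toNNReal fun z => g (G (γ, z)) :=
      (hg.1.comp (hG1.lipschitzWith γ)).weaken (one_mul _).le
    refine (enorm_integral_sub_le_mul_wDist_add hK _ _ hL fun z => hg.2 _).trans ?_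
    rw [fiberR_real_univ, fiberR_real_univ]
    exact add_le_add (mul_le_mul_right hw _) hφ
  have hG₂ : Measurable G := measurable_snd.comp hG
  have hE_bound := (ae_enorm_integral_fiberR_sub_le_iff h (f := fun p => g (G p))
    (integrable_comp_of_mem_lipUnitBall μ₁ hg hG₂)
    (integrable_comp_of_mem_lipUnitBall μ₂ hg hG₂)).1 hfiber _ (hσ.measurable hE)
  have hg₂ : Measurable fun p : SigmaA N A × K => g p.2 :=
    hg.1.continuous.measurable.comp measurable_snd
  rw [setIntegral_map_skew hG hg₂ hE, setIntegral_map_skew hG hg₂ hE,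
    ← hσ.measure_preimage hE.nullMeasurableSet]
  exact hE_bound

section ThetaNorm

variable {X : Type*} {f : X → ℝ}

theorem ofReal_abs_le_supNormE (f : X → ℝ) (x : X) : ENNReal.ofReal |f x| ≤ supNormE f :=
  le_iSup (fun x => ENNReal.ofReal |f x|) x

theorem eLpNormEssSup_le_supNormE [MeasurableSpace X] (f : X → ℝ) (m : Measure X) :
    eLpNormEssSup f m ≤ supNormE f :=
  essSup_le_of_ae_le _ <| ae_of_all _ fun x =>
    (Real.enorm_eq_ofReal_abs (f x)).trans_le (ofReal_abs_le_supNormE f x)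

theorem lipD_of_lipConst_ne_top {d : X → X → ℝ} (hd : ∀ x y, 0 ≤ d x y)
    (hd_eq : ∀ x y, d x y = 0 → x = y) (hf : lipConst d f ≠ ⊤) : LipD d f := by
  refine ⟨(lipConst d f).toReal, fun x y => ?_⟩
  rcases (hd x y).eq_or_lt with h0 | hpos
  · rw [hd_eq x y h0.symm, sub_self, abs_zero]
    exact mul_nonneg ENNReal.toReal_nonneg (hd y y)
  · rw [← div_le_iff₀ hpos, ← ENNReal.ofReal_le_iff_le_toReal hf]
    exact le_iSup₂ (f := fun x y => ENNReal.ofReal (|f x - f y| / d x y)) x y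

variable {θ : ℝ} {φ : SigmaA N A → ℝ}

theorem dTheta_term_nonneg (hθ0 : 0 ≤ θ) (x y : SigmaA N A) (i : ℕ) :
    0 ≤ θ ^ i * (if x.val i = y.val i then (0 : ℝ) else 1) := by
  split_ifs <;> positivity

theorem dTheta_term_le (hθ0 : 0 ≤ θ) (x y : SigmaA N A) (i : ℕ) :
    θ ^ i * (if x.val i = y.val i then (0 : ℝ) else 1) ≤ θ ^ i :=
  mul_le_of_le_one_right (by positivity) (by split_ifs <;> norm_num)

theorem dTheta_self (θ : ℝ) (x : SigmaA N A) : dTheta θ x x = 0 := by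
  simp [dTheta]

theorem dTheta_nonneg (hθ0 : 0 ≤ θ) (x y : SigmaA N A) : 0 ≤ dTheta θ x y :=
  tsum_nonneg (dTheta_term_nonneg hθ0 x y)

theorem eq_of_dTheta_eq_zero (hθ0 : 0 < θ) (hθ1 : θ < 1) {x y : SigmaA N A}
    (h : dTheta θ x y = 0) : x = y := by
  have hsum := (Summable.of_nonneg_of_le (dTheta_term_nonneg hθ0.le x y)
    (dTheta_term_le hθ0.le x y) (summable_geometric_of_lt_one hθ0.le hθ1)).hasSum
  rw [← dTheta, h, hasSum_zero_iff_of_nonneg (dTheta_term_nonneg hθ0.le x y)] at hsum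
  refine Subtype.ext (funext fun i => ?_)
  by_contra hne
  simpa [hne, hθ0.ne'] using congrFun hsum i

theorem continuous_dTheta (hθ0 : 0 ≤ θ) (hθ1 : θ < 1) (x : SigmaA N A) :
    Continuous (dTheta θ x) := by
  refine continuous_tsum (fun i => ?_) (summable_geometric_of_lt_one hθ0 hθ1) fun i y => ?_
  · have hcoord : Continuous fun y : SigmaA N A => y.val i :=
      (continuous_apply i).comp continuous_subtype_val
    exact (continuous_of_discreteTopology
      (f := fun a : Fin N => θ ^ i * (if x.val i = a then (0 : ℝ) else 1))).comp hcoord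
  · rw [Real.norm_of_nonneg (dTheta_term_nonneg hθ0 x y i)]
    exact dTheta_term_le hθ0 x y i

theorem LipD.continuous (hθ0 : 0 ≤ θ) (hθ1 : θ < 1) (hφ : LipD (dTheta θ) φ) :
    Continuous φ := by
  obtain ⟨L, hL⟩ := hφ
  refine continuous_iff_continuousAt.2 fun x => tendsto_iff_dist_tendsto_zero.2 ?_
  have hlim : Filter.Tendsto (fun y => L * dTheta θ x y) (nhds x) (nhds 0) := by
    simpa only [dTheta_self, mul_zero] using
      ((continuous_dTheta hθ0 hθ1 x).const_mul L).tendsto x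
  refine squeeze_zero (fun _ => dist_nonneg) (fun y => ?_) hlim
  rw [dist_comm, Real.dist_eq]
  exact hL x y

theorem lipD_of_thetaNorm_ne_top (hθ0 : 0 < θ) (hθ1 : θ < 1)
    (hφ : thetaNorm (dTheta θ) φ ≠ ⊤) : LipD (dTheta θ) φ :=
  lipD_of_lipConst_ne_top (dTheta_nonneg hθ0.le) (fun _ _ => eq_of_dTheta_eq_zero hθ0 hθ1)
    (ne_top_of_le_ne_top hφ le_add_self)

theorem integrable_of_thetaNorm_ne_top (hθ0 : 0 < θ) (hθ1 : θ < 1)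
    (hφ : thetaNorm (dTheta θ) φ ≠ ⊤) (m : Measure (SigmaA N A)) [IsFiniteMeasure m] :
    Integrable φ m := by
  have hcont := (lipD_of_thetaNorm_ne_top hθ0 hθ1 hφ).continuous hθ0.le hθ1
  have hsup : supNormE φ ≠ ⊤ := ne_top_of_le_ne_top hφ le_self_add
  refine Integrable.of_bound hcont.measurable.aestronglyMeasurable (supNormE φ).toReal
    (ae_of_all _ fun x => ?_)
  rw [Real.norm_eq_abs, ← ENNReal.ofReal_le_iff_le_toReal hsup]
  exact ofReal_abs_le_supNormE φ x

end ThetaNorm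

section JordanDecomposition

variable {X Y : Type*} [MeasurableSpace X] [MeasurableSpace Y]

instance isFiniteMeasure_jPos (μ : SignedMeasure X) : IsFiniteMeasure (jPos μ) :=
  μ.toJordanDecomposition.posPart_finite

instance isFiniteMeasure_jNeg (μ : SignedMeasure X) : IsFiniteMeasure (jNeg μ) :=
  μ.toJordanDecomposition.negPart_finite

theorem jPos_map_add_map_jNeg (μ : SignedMeasure X) {f : X → Y} (hf : Measurable f) :
    jPos (μ.map f) + (jNeg μ).map f = (jPos μ).map f + jNeg (μ.map f) := by
  ext E hE
  have hmap := VectorMeasure.map_apply μ hf hE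
  rw [SignedMeasure.apply_eq_posPart_real_sub_negPart_real _ hE,
    SignedMeasure.apply_eq_posPart_real_sub_negPart_real _ (hf hE), sub_eq_sub_iff_add_eq_add]
    at hmap
  rw [← measureReal_eq_measureReal_iff, measureReal_add_apply, measureReal_add_apply,
    map_measureReal_apply hf hE, map_measureReal_apply hf hE]
  exact hmap

theorem jPos_absolutelyContinuous {μ : SignedMeasure X} {ν₁ ν₂ : Measure X}
    (h : jPos μ + ν₂ = ν₁ + jNeg μ) : jPos μ ≪ ν₁ :=
  Measure.absolutelyContinuous_of_add_of_mutuallySingular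
    (by rw [← jNeg, ← h]; exact Measure.AbsolutelyContinuous.rfl.add_right ν₂)
    μ.toJordanDecomposition.mutuallySingular

theorem jNeg_absolutelyContinuous {μ : SignedMeasure X} {ν₁ ν₂ : Measure X}
    (h : jPos μ + ν₂ = ν₁ + jNeg μ) : jNeg μ ≪ ν₂ :=
  Measure.absolutelyContinuous_of_add_of_mutuallySingular
    (by rw [← jPos, add_comm, h, add_comm]; exact Measure.AbsolutelyContinuous.rfl.add_right ν₁)
    μ.toJordanDecomposition.mutuallySingular.symm

theorem transfer_iterate {G : SigmaA N A × Y → Y} (hG : Measurable (skew G)) (n : ℕ)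
    (μ : SignedMeasure (SigmaA N A × Y)) : (transfer G)^[n] μ = μ.map (skew G)^[n] := by
  induction n with
  | zero => rw [Function.iterate_zero, Function.iterate_zero, VectorMeasure.map_id, id]
  | succ n ih =>
    rw [Function.iterate_succ_apply', ih]
    ext E hE
    rw [transfer, VectorMeasure.map_apply _ hG hE,
      VectorMeasure.map_apply _ (hG.iterate n) (hG hE),
      VectorMeasure.map_apply _ (hG.iterate (n + 1)) hE, Function.iterate_succ', preimage_comp]

end JordanDecomposition

theorem infNorm_eq_infNormPair {m : Measure (SigmaA N A)} [IsFiniteMeasure m]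
    {μ : SignedMeasure (SigmaA N A × K)} {ν₁ ν₂ : Measure (SigmaA N A × K)}
    (hν : MemABPair m ν₁ ν₂) (h : jPos μ + ν₂ = ν₁ + jNeg μ) :
    infNorm m μ = infNormPair m ν₁ ν₂ := by
  have hμ : MemABPair m (jPos μ) (jNeg μ) :=
    ⟨((jPos_absolutelyContinuous h).map measurable_fst).trans hν.1,
      ((jNeg_absolutelyContinuous h).map measurable_fst).trans hν.2.1,
      inferInstance, inferInstance⟩
  exact infNormPair_eq_of_add_eq_add hμ hν h

section GeometricSums

theorem geom_sum₂_succ_eq_pow_add_mul {R : Type*} [CommSemiring R] (x y : R) (n : ℕ) :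
    ∑ i ∈ Finset.range (n + 1), x ^ i * y ^ (n - i) =
      x ^ n + y * ∑ i ∈ Finset.range n, x ^ i * y ^ (n - 1 - i) := by
  rw [Finset.sum_range_succ_comm, tsub_self, pow_zero, mul_one, Finset.mul_sum]
  congr 1
  refine Finset.sum_congr rfl fun i hi => ?_
  rw [mul_left_comm, ← pow_succ', tsub_right_comm, tsub_add_cancel_of_le]
  exact Nat.le_sub_of_add_le' (Finset.mem_range.1 hi)

theorem le_pow_mul_add_geom_sum₂_mul {R : Type*} [CommSemiring R] [PartialOrder R]
    [IsOrderedRing R] {a : ℕ → R} {α r c : R} (hα : 0 ≤ α)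
    (h : ∀ n, a (n + 1) ≤ α * a n + r ^ n * c) (n : ℕ) :
    a n ≤ α ^ n * a 0 + (∑ i ∈ Finset.range n, r ^ i * α ^ (n - 1 - i)) * c := by
  induction n with
  | zero => simp
  | succ n ih =>
    calc a (n + 1) ≤ α * a n + r ^ n * c := h n
      _ ≤ α * (α ^ n * a 0 + (∑ i ∈ Finset.range n, r ^ i * α ^ (n - 1 - i)) * c) + r ^ n * c := by
        gcongr
      _ = α ^ (n + 1) * a 0 +
          (∑ i ∈ Finset.range (n + 1), r ^ i * α ^ (n + 1 - 1 - i)) * c := by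
        rw [add_tsub_cancel_right, geom_sum₂_succ_eq_pow_add_mul]
        ring

theorem ofReal_geom_sum₂ {x y : ℝ} (hx : 0 ≤ x) (hy : 0 ≤ y) (n : ℕ) :
    ENNReal.ofReal (∑ i ∈ Finset.range n, x ^ i * y ^ (n - 1 - i)) =
      ∑ i ∈ Finset.range n, ENNReal.ofReal x ^ i * ENNReal.ofReal y ^ (n - 1 - i) := by
  rw [ENNReal.ofReal_sum_of_nonneg fun i _ => by positivity]
  exact Finset.sum_congr rfl fun i _ => by
    rw [ENNReal.ofReal_mul (by positivity), ENNReal.ofReal_pow hx, ENNReal.ofReal_pow hy]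

variable {α β r : ℝ}

theorem geom_sum₂_mul_le_pow_mul_geom_sum (hα0 : 0 ≤ α) (hr0 : 0 ≤ r) (hβ0 : 0 ≤ β)
    (hβ1 : β ≤ 1) (hα : α ≤ β ^ 2) (hr : r ≤ β ^ 2) (n : ℕ) :
    (∑ i ∈ Finset.range n, r ^ i * α ^ (n - 1 - i)) * β ≤
      β ^ n * ∑ i ∈ Finset.range n, α ^ i := by
  induction n with
  | zero => simp
  | succ n ih =>
    rw [add_tsub_cancel_right, geom_sum₂_succ_eq_pow_add_mul, geom_sum_succ]
    set S := ∑ i ∈ Finset.range n, r ^ i * α ^ (n - 1 - i)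
    set B := ∑ i ∈ Finset.range n, α ^ i
    have hαβ : α ≤ β := hα.trans (pow_le_of_le_one hβ0 hβ1 two_ne_zero)
    have hrn : r ^ n ≤ β ^ n * β ^ n := by
      rw [← mul_pow, ← sq]
      exact pow_le_pow_left₀ hr0 hr n
    have hBβ : B ≤ ∑ i ∈ Finset.range n, β ^ i :=
      Finset.sum_le_sum fun i _ => pow_le_pow_left₀ hα0 hαβ i
    have hB : (1 - β) * (α * B) ≤ β * (1 - β ^ n) :=
      calc (1 - β) * (α * B) ≤ (1 - β) * (β * ∑ i ∈ Finset.range n, β ^ i) := by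
            have := sub_nonneg.2 hβ1
            gcongr
        _ = β * (1 - β ^ n) := by rw [← mul_neg_geom_sum β n]; ring
    calc (r ^ n + α * S) * β = r ^ n * β + α * (S * β) := by ring
      _ ≤ β ^ n * β ^ n * β + α * (β ^ n * B) := by gcongr
      _ = β ^ n * (β * β ^ n + α * B) := by ring
      _ ≤ β ^ n * (β * (α * B) + β) := by gcongr β ^ n * ?_; linarith
      _ = β ^ (n + 1) * (α * B + 1) := by ring

theorem geom_sum₂_le_pow_div (hα0 : 0 ≤ α) (hα1 : α < 1) (hr0 : 0 ≤ r) (hβ0 : 0 < β)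
    (hβ1 : β ≤ 1) (hα : α ≤ β ^ 2) (hr : r ≤ β ^ 2) (n : ℕ) :
    ∑ i ∈ Finset.range n, r ^ i * α ^ (n - 1 - i) ≤ β ^ n / β / (1 - α) := by
  have hgeom : ∑ i ∈ Finset.range n, α ^ i ≤ (1 - α)⁻¹ := by
    rw [← tsum_geometric_of_lt_one hα0 hα1]
    exact (summable_geometric_of_lt_one hα0 hα1).sum_le_tsum _ fun i _ => pow_nonneg hα0 i
  calc _ ≤ β ^ n * (∑ i ∈ Finset.range n, α ^ i) / β :=
        (le_div_iff₀ hβ0).2 (geom_sum₂_mul_le_pow_mul_geom_sum hα0 hr0 hβ0.le hβ1 hα hr n)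
    _ ≤ β ^ n * (1 - α)⁻¹ / β := by gcongr
    _ = β ^ n / β / (1 - α) := by ring

theorem pow_le_pow_div (hα0 : 0 ≤ α) (hβ0 : 0 < β) (hβ1 : β ≤ 1) (hα : α ≤ β ^ 2) (n : ℕ) :
    α ^ n ≤ β ^ n / β :=
  calc α ^ n ≤ β ^ n :=
        pow_le_pow_left₀ hα0 (hα.trans (pow_le_of_le_one hβ0.le hβ1 two_ne_zero)) n
    _ ≤ β ^ n / β := le_div_self (by positivity) hβ0 hβ1

end GeometricSums

section Iterates

theorem map_iterate_succ {X : Type*} [MeasurableSpace X] {f : X → X} (hf : Measurable f)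
    (μ : Measure X) (n : ℕ) : μ.map f^[n + 1] = (μ.map f^[n]).map f := by
  rw [Function.iterate_succ', Measure.map_map hf (hf.iterate n)]

theorem MemABPair.map_iterate {Y : Type*} [MeasurableSpace Y] {m : Measure (SigmaA N A)}
    {G : SigmaA N A × Y → Y} {μ₁ μ₂ : Measure (SigmaA N A × Y)} (h : MemABPair m μ₁ μ₂)
    (hσ : MeasurePreserving shift m m) (hG : Measurable (skew G)) (n : ℕ) :
    MemABPair m (μ₁.map (skew G)^[n]) (μ₂.map (skew G)^[n]) := by
  induction n with
  | zero => simpa only [Function.iterate_zero, Measure.map_id] using h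
  | succ n ih =>
    rw [map_iterate_succ hG, map_iterate_succ hG]
    exact ih.map hσ hG

theorem phiPair_map_iterate {Y : Type*} [MeasurableSpace Y] {m : Measure (SigmaA N A)}
    [IsFiniteMeasure m] {G : SigmaA N A × Y → Y} {μ₁ μ₂ : Measure (SigmaA N A × Y)}
    {Pσ : (SigmaA N A → ℝ) → SigmaA N A → ℝ}
    (hP : IsPerronFrobenius m Pσ) (hσ : MeasurePreserving shift m m)
    (hG : Measurable (skew G)) (h : MemABPair m μ₁ μ₂) {ψ : SigmaA N A → ℝ}
    (hψ : ψ =ᵐ[m] phiPair m μ₁ μ₂) (hPψ : ∀ n, Integrable (Pσ^[n] ψ) m) (n : ℕ) :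
    Pσ^[n] ψ =ᵐ[m] phiPair m (μ₁.map (skew G)^[n]) (μ₂.map (skew G)^[n]) := by
  induction n with
  | zero => simpa only [Function.iterate_zero, Measure.map_id, id] using hψ
  | succ n ih =>
    have hint := hPψ (n + 1)
    rw [Function.iterate_succ_apply'] at hint ⊢
    rw [map_iterate_succ hG, map_iterate_succ hG]
    exact phiPair_map_skew hP hσ hG (h.map_iterate hσ hG n) ih hint

variable {m : Measure (SigmaA N A)} [IsFiniteMeasure m] {G : SigmaA N A × K → K} {α : ℝ}

theorem infNormPair_map_iterate_le {μ₁ μ₂ : Measure (SigmaA N A × K)} {r : ℝ} {c : ℝ≥0∞}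
    (hσ : MeasurePreserving shift m m) (hK : ∀ z w : K, dist z w ≤ 1)
    (hG : Measurable (skew G)) (hG1 : CondG1 G α) (hα0 : 0 ≤ α) (hr0 : 0 ≤ r)
    (h : MemABPair m μ₁ μ₂)
    (hφ : ∀ n, eLpNormEssSup (phiPair m (μ₁.map (skew G)^[n]) (μ₂.map (skew G)^[n])) m ≤
      ENNReal.ofReal r ^ n * c) (n : ℕ) :
    infNormPair m (μ₁.map (skew G)^[n]) (μ₂.map (skew G)^[n]) ≤
      ENNReal.ofReal (α ^ n) * infNormPair m μ₁ μ₂ +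
        ENNReal.ofReal (∑ i ∈ Finset.range n, r ^ i * α ^ (n - 1 - i)) * c := by
  have hstep (k : ℕ) : infNormPair m (μ₁.map (skew G)^[k + 1]) (μ₂.map (skew G)^[k + 1]) ≤
      ENNReal.ofReal α * infNormPair m (μ₁.map (skew G)^[k]) (μ₂.map (skew G)^[k]) +
        ENNReal.ofReal r ^ k * c := by
    rw [map_iterate_succ hG, map_iterate_succ hG]
    exact (infNormPair_map_skew_le hσ hK hG hG1 (h.map_iterate hσ hG k)).trans
      (add_le_add_right (hφ k) _)
  rw [ENNReal.ofReal_pow hα0, ofReal_geom_sum₂ hr0 hα0]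
  simpa only [Function.iterate_zero, Measure.map_id] using
    le_pow_mul_add_geom_sum₂_mul (a := fun k => infNormPair m (μ₁.map (skew G)^[k])
      (μ₂.map (skew G)^[k])) (zero_le (a := ENNReal.ofReal α)) hstep n

theorem infNorm_transfer_iterate {μ : SignedMeasure (SigmaA N A × K)} (hμ : MemAB m μ)
    (hσ : MeasurePreserving shift m m) (hG : Measurable (skew G)) (n : ℕ) :
    infNorm m ((transfer G)^[n] μ) =
      infNormPair m ((jPos μ).map (skew G)^[n]) ((jNeg μ).map (skew G)^[n]) := by
  rw [transfer_iterate hG]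
  exact infNorm_eq_infNormPair (MemABPair.map_iterate hμ hσ hG n)
    (jPos_map_add_map_jNeg μ (hG.iterate n))

end Iterates

section SpectralGap

variable {m : Measure (SigmaA N A)} [IsFiniteMeasure m] {θ D r : ℝ}
  {Pσ : (SigmaA N A → ℝ) → SigmaA N A → ℝ} {ψ : SigmaA N A → ℝ}

theorem HasGap.integrable_iterate (hgap : HasGap m θ Pσ D r) (hθ0 : 0 < θ) (hθ1 : θ < 1)
    (hψ : thetaNorm (dTheta θ) ψ ≠ ⊤) (hmean : ∫ x, ψ x ∂m = 0) (n : ℕ) :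
    Integrable (Pσ^[n] ψ) m :=
  integrable_of_thetaNorm_ne_top hθ0 hθ1
    (ne_top_of_le_ne_top (ENNReal.mul_ne_top ENNReal.ofReal_ne_top hψ)
      (hgap ψ (lipD_of_thetaNorm_ne_top hθ0 hθ1 hψ) hmean n)) m

theorem infNorm_transfer_iterate_le (hθ0 : 0 < θ) (hθ1 : θ < 1)
    (hσ : MeasurePreserving shift m m) (hK : ∀ z w : K, dist z w ≤ 1)
    {G : SigmaA N A × K → K} (hG : Measurable (skew G)) {α : ℝ} (hα0 : 0 ≤ α)
    (hG1 : CondG1 G α) (hP : IsPerronFrobenius m Pσ) (hD : 0 ≤ D) (hr0 : 0 ≤ r)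
    (hgap : HasGap m θ Pσ D r) {μ : SignedMeasure (SigmaA N A × K)} (hμ : MemAB m μ)
    (hψμ : ψ =ᵐ[m] phiPair m (jPos μ) (jNeg μ)) (hψ : thetaNorm (dTheta θ) ψ ≠ ⊤)
    (hmean : ∫ x, ψ x ∂m = 0) (n : ℕ) :
    infNorm m ((transfer G)^[n] μ) ≤ ENNReal.ofReal (α ^ n) * infNorm m μ +
      ENNReal.ofReal (∑ i ∈ Finset.range n, r ^ i * α ^ (n - 1 - i)) *
        (ENNReal.ofReal D * thetaNorm (dTheta θ) ψ) := by
  rw [infNorm_transfer_iterate hμ hσ hG]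
  refine infNormPair_map_iterate_le hσ hK hG hG1 hα0 hr0 hμ (fun k => ?_) n
  rw [← eLpNormEssSup_congr_ae (phiPair_map_iterate hP hσ hG hμ hψμ
    (hgap.integrable_iterate hθ0 hθ1 hψ hmean) k)]
  calc eLpNormEssSup (Pσ^[k] ψ) m ≤ thetaNorm (dTheta θ) (Pσ^[k] ψ) :=
        (eLpNormEssSup_le_supNormE _ m).trans le_self_add
    _ ≤ ENNReal.ofReal (D * r ^ k) * thetaNorm (dTheta θ) ψ :=
        hgap ψ (lipD_of_thetaNorm_ne_top hθ0 hθ1 hψ) hmean k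
    _ = ENNReal.ofReal r ^ k * (ENNReal.ofReal D * thetaNorm (dTheta θ) ψ) := by
        rw [ENNReal.ofReal_mul hD, ENNReal.ofReal_pow hr0, mul_comm (ENNReal.ofReal D), mul_assoc]

end SpectralGap

theorem le_mul_sNorm {m : Measure (SigmaA N A)} {θ : ℝ} {μ : SignedMeasure (SigmaA N A × K)}
    {a b : ℝ≥0∞} (hb0 : b ≠ 0) (hb : b ≠ ⊤)
    (h : ∀ ψ : SigmaA N A → ℝ, ψ =ᵐ[m] phiPair m (jPos μ) (jNeg μ) →
      thetaNorm (dTheta θ) ψ ≠ ⊤ → a ≤ b * (thetaNorm (dTheta θ) ψ + infNorm m μ)) :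
    a ≤ b * sNorm m θ μ := by
  rw [sNorm, sNormPair, thetaNormMu, ENNReal.iInf_add, ENNReal.mul_iInf_of_ne hb0 hb]
  refine le_iInf fun ⟨ψ, hψμ⟩ => ?_
  by_cases hψ : thetaNorm (dTheta θ) ψ = ⊤
  · simp [hψ, hb0]
  · exact h ψ hψμ hψ

theorem transfer_convergence_to_equilibrium_general
    {θ : ℝ} (hθ0 : 0 < θ) (hθ1 : θ < 1)
    {m : Measure (SigmaA N A)} [IsFiniteMeasure m] (hσ : MeasurePreserving shift m m)
    (hdiam : Metric.diam (univ : Set K) ≤ 1)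
    {G : SigmaA N A × K → K} (hG : Measurable (skew G))
    {α : ℝ} (hα0 : 0 ≤ α) (hα1 : α < 1) (hG1 : CondG1 G α)
    {Pσ : (SigmaA N A → ℝ) → SigmaA N A → ℝ} (hP : IsPerronFrobenius m Pσ)
    {D r : ℝ} (hD : 0 ≤ D) (hr0 : 0 < r) (hr1 : r ≤ 1) (hgap : HasGap m θ Pσ D r)
    {μ : SignedMeasure (SigmaA N A × K)} (hμ : MemAB m μ)
    (hmean : ∫ γ, phiPair m (jPos μ) (jNeg μ) γ ∂m = 0) (n : ℕ) :
    infNorm m ((transfer G)^[n] μ) ≤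
      ENNReal.ofReal ((1 + D / (1 - α)) / max (Real.sqrt α) (Real.sqrt r) *
        max (Real.sqrt α) (Real.sqrt r) ^ n) * sNorm m θ μ := by
  have hK (z w : K) : dist z w ≤ 1 :=
    (Metric.dist_le_diam_of_mem isCompact_univ.isBounded (mem_univ z) (mem_univ w)).trans hdiam
  set β := max (Real.sqrt α) (Real.sqrt r)
  have hβ0 : 0 < β := lt_max_of_lt_right (Real.sqrt_pos.2 hr0)
  have hβ1 : β ≤ 1 := max_le (Real.sqrt_le_one.2 hα1.le) (Real.sqrt_le_one.2 hr1)
  have hα : α ≤ β ^ 2 := (Real.sqrt_le_left hβ0.le).1 (le_max_left _ _)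
  have hr : r ≤ β ^ 2 := (Real.sqrt_le_left hβ0.le).1 (le_max_right _ _)
  have : 0 ≤ D / (1 - α) := div_nonneg hD (sub_nonneg.2 hα1.le)
  set S := ∑ i ∈ Finset.range n, r ^ i * α ^ (n - 1 - i)
  set C := (1 + D / (1 - α)) / β * β ^ n
  have hC : C = β ^ n / β + D * (β ^ n / β / (1 - α)) := by ring
  have hαC : α ^ n ≤ C := hC ▸ (pow_le_pow_div hα0 hβ0 hβ1 hα n).trans
    (le_add_of_nonneg_right <| mul_nonneg hD <| div_nonneg (by positivity) (sub_nonneg.2 hα1.le))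
  have hSC : S * D ≤ C := by
    rw [hC, mul_comm S]
    exact le_add_of_nonneg_of_le (by positivity) <|
      mul_le_mul_of_nonneg_left (geom_sum₂_le_pow_div hα0 hα1 hr0.le hβ0 hβ1 hα hr n) hD
  refine le_mul_sNorm (ENNReal.ofReal_pos.2 (by positivity)).ne' ENNReal.ofReal_ne_top
    fun ψ hψμ hψ => ?_
  calc infNorm m ((transfer G)^[n] μ)
      ≤ ENNReal.ofReal (α ^ n) * infNorm m μ +
          ENNReal.ofReal S * (ENNReal.ofReal D * thetaNorm (dTheta θ) ψ) :=
        infNorm_transfer_iterate_le hθ0 hθ1 hσ hK hG hα0 hG1 hP hD hr0.le hgap hμ hψμ hψ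
          ((integral_congr_ae hψμ).trans hmean) n
    _ ≤ ENNReal.ofReal C * infNorm m μ + ENNReal.ofReal C * thetaNorm (dTheta θ) ψ := by
        rw [← mul_assoc, ← ENNReal.ofReal_mul' hD]
        gcongr
    _ = ENNReal.ofReal C * (thetaNorm (dTheta θ) ψ + infNorm m μ) := by ring

/-- **Exponential convergence to equilibrium.**
With `β₁ = max{√α, √r}` and `D₂ = (1 + D/(1-α))/β₁`, for every
`μ ∈ V = {μ ∈ S^∞ : ∫ φ₁ dm = 0}` and every `n ≥ 1`,
`‖F^{*n}μ‖_∞ ≤ D₂ β₁^n ‖μ‖_{S^∞}`. -/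
theorem transfer_convergence_to_equilibrium
    (N : ℕ) (A : Fin N → Fin N → Bool) (hA : Aperiodic A)
    (θ : ℝ) (hθ0 : 0 < θ) (hθ1 : θ < 1)
    (m : Measure (SigmaA N A)) [IsProbabilityMeasure m]
    (hmM : IsMarkov m) (hminv : m.map shift = m)
    {K : Type*} [MetricSpace K] [CompactSpace K] [Nonempty K]
    [MeasurableSpace K] [BorelSpace K]
    (hdiam : Metric.diam (Set.univ : Set K) = 1)
    (G : SigmaA N A × K → K) (hGm : Measurable (skew G))
    (α : ℝ) (hα0 : 0 < α) (hα1 : α < 1) (hG1 : CondG1 G α)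
    (Pσ : (SigmaA N A → ℝ) → SigmaA N A → ℝ) (hPF : IsPerronFrobenius m Pσ)
    (D r : ℝ) (hD : 0 < D) (hr0 : 0 < r) (hr1 : r < 1)
    (hgap : HasGap m θ Pσ D r) :
    ∀ μ : SignedMeasure (SigmaA N A × K), MemS m θ μ →
      (∫ γ, phiPair m (jPos μ) (jNeg μ) γ ∂m) = 0 →
      ∀ n : ℕ, 1 ≤ n →
        infNorm m ((transfer G)^[n] μ) ≤
          ENNReal.ofReal
            ((1 + D / (1 - α)) / max (Real.sqrt α) (Real.sqrt r) *
              max (Real.sqrt α) (Real.sqrt r) ^ n) * sNorm m θ μ :=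
  fun _ hμ hmean n _ => transfer_convergence_to_equilibrium_general hθ0 hθ1
    ⟨measurable_shift, hminv⟩ hdiam.le hGm hα0.le hα1 hG1 hPF hD.le hr0 hr1.le hgap hμ.1 hmean n

end RDS
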